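/- arXiv:2409.01430 — 2 statements merged into one kernel-verified Lean document; each statement's English description precedes it below -/
import Mathlib

section
/- Assume the continuum hypothesis (2^ℵ₀ = ℵ₁). Then there exists a family {A_i : i ∈ I} of subsets of ℝ with card(I) = 2^{ℵ₁} such that: (1) each A_i is a Sierpiński set and is not Lebesgue measurable; (2) for every i ∈ I and every x ∈ ℝ, the translate A_i + x is a Sierpiński set; and (3) for every J ⊆ I with card(J) ≤ ℵ₀ and every function f : J → {0,1}, the complement in ℝ of ⋂_{j∈J} A_j^{f(j)} contains no Lebesgue measurable set of positive measure; in particular ⋂_{j∈J} A_j^{f(j)} meets every Lebesgue measurable subset of ℝ of positive measure. -/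
/-!
Under CH there are only `ℵ₁` Borel null sets and `ℵ₁` Borel sets of positive measure, so a
recursion of length `ω₁` picks points that avoid all earlier null sets while visiting every
positive set. The chosen points form a Sierpiński set `S`, and since `ℵ₁ = ℵ₁ · 𝔠` they can be
coloured by any set `T` of at most continuum many colours in such a way that each colour class
still visits every positive set. On a suitable `T` there are `2 ^ 𝔠` sets all of whose countable
Boolean combinations are nonempty; their preimages under the colouring, cut down to `S`, form the
required family.
-/

open MeasureTheory

/-- `A` is a Sierpiński set: uncountable with countable intersection with every
Lebesgue-null set. -/
def IsSierpinski (A : Set ℝ) : Prop :=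
  ¬A.Countable ∧ ∀ N : Set ℝ, volume N = 0 → (A ∩ N).Countable

universe u v w

section Thick

variable {α : Type u} [MeasurableSpace α] {μ : Measure α} {A B : Set α}

/-- A set is thick (has full outer measure) if it meets every measurable set of positive
measure. -/
def IsThick (μ : Measure α) (A : Set α) : Prop :=
  ∀ B : Set α, MeasurableSet B → 0 < μ B → (A ∩ B).Nonempty

theorem IsThick.mono (hA : IsThick μ A) (hAB : A ⊆ B) : IsThick μ B := fun C hC hpos =>
  (hA C hC hpos).mono (Set.inter_subset_inter_left C hAB)

theorem IsThick.measure_eq_zero_of_subset_compl (hA : IsThick μ A) (hB : NullMeasurableSet B μ)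
    (hBA : B ⊆ Aᶜ) : μ B = 0 := by
  obtain ⟨C, hCB, hC, hCB_ae⟩ := hB.exists_measurable_subset_ae_eq
  rw [← measure_congr hCB_ae]
  by_contra hne
  obtain ⟨x, hxA, hxC⟩ := hA C hC (pos_iff_ne_zero.2 hne)
  exact hBA (hCB hxC) hxA

theorem IsThick.measure_ne_zero [NeZero μ] (hA : IsThick μ A) : μ A ≠ 0 := by
  intro hnull
  have hcompl : μ Aᶜ = 0 :=
    hA.measure_eq_zero_of_subset_compl (NullMeasurableSet.of_null hnull).compl subset_rfl
  have huniv : μ Set.univ = 0 := by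
    simpa only [Set.union_compl_self] using measure_union_null hnull hcompl
  exact NeZero.ne μ (Measure.measure_univ_eq_zero.1 huniv)

theorem IsThick.not_countable [NullSingletonClass μ] [NeZero μ] (hA : IsThick μ A) :
    ¬A.Countable :=
  fun h => hA.measure_ne_zero (h.measure_zero μ)

theorem IsThick.not_nullMeasurableSet [NeZero μ] (hA : IsThick μ A) (hAc : IsThick μ Aᶜ) :
    ¬NullMeasurableSet A μ := fun h =>
  hA.measure_ne_zero (hAc.measure_eq_zero_of_subset_compl h (compl_compl A).superset)

end Thick

section Sierpinski

variable {α : Type u} [MeasurableSpace α] {μ : Measure α} {A S : Set α}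

/-- The notion `IsSierpinski` relative to an arbitrary measure: an uncountable set that meets
every null set in a countable set. -/
def IsSierpinskiFor (μ : Measure α) (A : Set α) : Prop :=
  ¬A.Countable ∧ ∀ N : Set α, μ N = 0 → (A ∩ N).Countable

theorem IsSierpinskiFor.mono (hS : IsSierpinskiFor μ S) (hAS : A ⊆ S) (hA : ¬A.Countable) :
    IsSierpinskiFor μ A :=
  ⟨hA, fun N hN => (hS.2 N hN).mono (Set.inter_subset_inter_left N hAS)⟩

theorem IsSierpinskiFor.image {β : Type v} [MeasurableSpace β] {ν : Measure β} {φ : α → β}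
    (hA : IsSierpinskiFor μ A) (hinj : Function.Injective φ)
    (hφ : Measure.QuasiMeasurePreserving φ μ ν) : IsSierpinskiFor ν (φ '' A) := by
  refine ⟨fun h => hA.1 (Set.countable_of_injective_of_countable_image hinj.injOn h),
    fun N hN => ?_⟩
  rw [← Set.image_inter_preimage]
  exact (hA.2 _ (hφ.preimage_null hN)).image φ

end Sierpinski

section SignedInter

variable {I : Type v} {α : Type u}

/-- The Boolean combination `⋂ j ∈ J, A_j ^ f(j)`, where `false` stands for the exponent `0`
(the set itself) and `true` for the exponent `1` (its complement). -/
def signedInter (A : I → Set α) (J : Set I) (f : J → Bool) : Set α :=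
  ⋂ j : J, cond (f j) (A j)ᶜ (A j)

theorem mem_signedInter {A : I → Set α} {J : Set I} {f : J → Bool} {x : α} :
    x ∈ signedInter A J f ↔ ∀ j : J, x ∈ A j ↔ f j = false := by
  refine Set.mem_iInter.trans (forall_congr' fun j => ?_)
  cases f j <;> simp

end SignedInter

section StrictlyIndependent

variable {I : Type v} {α : Type u} [MeasurableSpace α] {μ : Measure α} {A : I → Set α}

/-- A family of sets is strictly independent if all its Boolean combinations over countably many
indices are thick. -/
def IsStrictlyIndependent (μ : Measure α) (A : I → Set α) : Prop :=
  ∀ J : Set I, J.Countable → ∀ f : J → Bool, IsThick μ (signedInter A J f)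

theorem IsStrictlyIndependent.isThick (hA : IsStrictlyIndependent μ A) (i : I) :
    IsThick μ (A i) :=
  (hA {i} (Set.countable_singleton i) fun _ => false).mono fun _ hx =>
    (mem_signedInter.1 hx ⟨i, rfl⟩).2 rfl

theorem IsStrictlyIndependent.isThick_compl (hA : IsStrictlyIndependent μ A) (i : I) :
    IsThick μ (A i)ᶜ :=
  (hA {i} (Set.countable_singleton i) fun _ => true).mono fun _ hx hxi =>
    Bool.noConfusion ((mem_signedInter.1 hx ⟨i, rfl⟩).1 hxi)

theorem IsStrictlyIndependent.injective [NeZero μ] (hA : IsStrictlyIndependent μ A) :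
    Function.Injective A := by
  classical
  intro i j hij
  by_contra hne
  obtain ⟨x, hx, -⟩ := hA {i, j} (Set.toFinite _).countable (fun k => decide (k.1 = j)) Set.univ
    MeasurableSet.univ (Measure.measure_univ_pos.2 (NeZero.ne μ))
  have hxi : x ∈ A i := (mem_signedInter.1 hx ⟨i, Or.inl rfl⟩).2 (decide_eq_false hne)
  have hxj : x ∉ A j := fun h =>
    of_decide_eq_false ((mem_signedInter.1 hx ⟨j, Or.inr rfl⟩).1 h) rfl
  exact hxj (hij ▸ hxi)

theorem IsStrictlyIndependent.of_thick_fibers {T : Type w} {S : Set α} {t : α → T}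
    (hS : ∀ c, IsThick μ (S ∩ t ⁻¹' {c})) {C : I → Set T}
    (hC : ∀ J : Set I, J.Countable → ∀ f : J → Bool, (signedInter C J f).Nonempty) :
    IsStrictlyIndependent μ fun i => S ∩ t ⁻¹' C i := by
  intro J hJ f
  obtain ⟨c, hc⟩ := hC J hJ f
  refine (hS c).mono ?_
  rintro x ⟨hxS, rfl⟩
  exact mem_signedInter.2 fun j => (and_iff_right hxS).trans (mem_signedInter.1 hc j)

end StrictlyIndependent

section TraceFamily

variable {R : Type u}

/-- The points on which the independent family `traceSet` lives: a sequence of test points of `R`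
together with a countable list of subsets of `ℕ`. The entry `none` allows the list to be empty. -/
abbrev TraceCode (R : Type u) : Type u :=
  (ℕ → R) × (ℕ → Option (Set ℕ))

/-- The codes `(s, L)` whose list `L` contains the trace `s ⁻¹' X` of `X` on the test points. These
sets, for `X` ranging over the subsets of `R`, form an independent family in the manner of
Fichtenholz–Kantorovich and Hausdorff. -/
def traceSet (X : Set R) : Set (TraceCode R) :=
  {p | some (p.1 ⁻¹' X) ∈ Set.range p.2}

theorem exists_seq_injOn_preimage [Nonempty R] {J : Set (Set R)} (hJ : J.Countable) :
    ∃ s : ℕ → R, J.InjOn fun X => s ⁻¹' X := by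
  have : Countable J := hJ.to_subtype
  have hsep : ∀ p : J × J, ∃ r : R, p.1 ≠ p.2 → ¬(r ∈ p.1.1 ↔ r ∈ p.2.1) := by
    rintro ⟨X, Y⟩
    by_contra! h
    exact (h (Classical.arbitrary R)).1 (Subtype.ext (Set.ext fun r => (h r).2))
  choose d hd using hsep
  obtain ⟨s, hs⟩ := ((Set.countable_range d).insert (Classical.arbitrary R)).exists_eq_range
    (Set.insert_nonempty _ _)
  refine ⟨s, fun X hX Y hY hXY => ?_⟩
  by_contra hne
  obtain ⟨n, hn⟩ : d (⟨X, hX⟩, ⟨Y, hY⟩) ∈ Set.range s := hs ▸ Or.inr ⟨_, rfl⟩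
  apply hd (⟨X, hX⟩, ⟨Y, hY⟩) fun h => hne (congrArg Subtype.val h)
  rw [← hn]
  exact Set.ext_iff.1 hXY n

theorem signedInter_traceSet_nonempty [Nonempty R] {J : Set (Set R)} (hJ : J.Countable)
    (f : J → Bool) : (signedInter traceSet J f).Nonempty := by
  obtain ⟨s, hs⟩ := exists_seq_injOn_preimage hJ
  have : Countable J := hJ.to_subtype
  let traces : Set (Option (Set ℕ)) := (fun j : J => some (s ⁻¹' j.1)) '' {j | f j = false}
  have htraces : traces.Countable := (Set.to_countable _).image _
  obtain ⟨L, hL⟩ := (htraces.insert none).exists_eq_range (Set.insert_nonempty _ _)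
  refine ⟨(s, L), mem_signedInter.2 fun j => ?_⟩
  change some (s ⁻¹' j.1) ∈ Set.range L ↔ f j = false
  rw [← hL]
  constructor
  · rintro (h | ⟨k, hk, hkj⟩)
    · cases h
    · have : k = j := Subtype.ext (hs k.2 j.2 (Option.some.inj hkj))
      exact this ▸ hk
  · exact fun hj => Or.inr ⟨j, hj, rfl⟩

open Cardinal in
theorem mk_traceCode_le_continuum (hR : #R ≤ 𝔠) : #(TraceCode R) ≤ 𝔠 := by
  have hseq : #(ℕ → R) ≤ 𝔠 := by
    simpa using power_le_power_right (c := ℵ₀) hR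
  have hlist : #(ℕ → Option (Set ℕ)) = 𝔠 := by
    have : (𝔠 : Cardinal.{0}) + 1 = 𝔠 := mod_cast continuum_add_nat 1
    simp [this]
  rw [mk_prod, hlist, lift_continuum, lift_uzero]
  exact (mul_le_mul_left hseq _).trans_eq continuum_mul_self

end TraceFamily

section Construction

open Cardinal

variable {α : Type u} [MeasurableSpace α]

theorem mk_measurableSet_le_continuum [MeasurableSpace.CountablyGenerated α] :
    #{B : Set α // MeasurableSet B} ≤ 𝔠 := by
  obtain ⟨b, hb, hgen⟩ :=
    MeasurableSpace.CountablyGenerated.isCountablyGenerated (α := α)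
  rw [hgen]
  exact MeasurableSpace.cardinal_measurableSet_le_continuum
    (hb.le_aleph0.trans aleph0_le_continuum)

theorem exists_surjective_of_lift_mk_le {ι : Type v} {β : Type w} [Nonempty β]
    (h : lift.{v} #β ≤ lift.{w} #ι) : ∃ f : ι → β, Function.Surjective f :=
  Function.exists_surjective_iff.2 ⟨inferInstance, lift_mk_le'.1 h⟩

theorem continuum_eq_aleph_one (CH : (2 : Cardinal.{v}) ^ ℵ₀ = ℵ₁) : (𝔠 : Cardinal.{w}) = ℵ₁ := by
  rw [two_power_aleph0] at CH
  apply lift_injective.{v}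
  simpa using congrArg lift.{w} CH

theorem countable_Iic_toType_ord_aleph_one (a : (ℵ₁ : Cardinal.{v}).ord.ToType) :
    (Set.Iic a).Countable := by
  have hlt : #(Set.Iio a) < ℵ₁ :=
    (mk_Iio_lt a (by rw [mk_ord_toType, Ordinal.type_toType])).trans_eq (mk_ord_toType ℵ₁)
  rw [← Set.Iio_insert]
  exact (le_aleph0_iff_set_countable.1 (lt_aleph_one_iff.1 hlt)).insert a

variable {μ : Measure α} [NullSingletonClass μ]

theorem exists_transfinite_selection {ι : Type v} [LinearOrder ι] [WellFoundedLT ι]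
    (hcount : ∀ a : ι, (Set.Iic a).Countable) {P N : ι → Set α}
    (hP : ∀ a, 0 < μ (P a)) (hN : ∀ a, μ (N a) = 0) :
    ∃ x : ι → α, Function.Injective x ∧ (∀ a, x a ∈ P a) ∧ ∀ a, ∀ b ≤ a, x a ∉ N b := by
  have hstep : ∀ (a : ι) (g : ∀ b, b < a → α),
      ∃ y ∈ P a, (∀ b ≤ a, y ∉ N b) ∧ ∀ b (h : b < a), g b h ≠ y := by
    intro a g
    have hunion : μ (⋃ b ∈ Set.Iic a, N b) = 0 :=
      (measure_biUnion_null_iff (hcount a)).2 fun b _ => hN b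
    have hrange : μ (Set.range fun b : Set.Iio a => g b.1 b.2) = 0 := by
      have : Countable (Set.Iio a) := ((hcount a).mono Set.Iio_subset_Iic_self).to_subtype
      exact (Set.countable_range _).measure_zero μ
    obtain ⟨y, hyP, hy⟩ := Set.not_subset.1 fun h =>
      (hP a).ne' (measure_mono_null h (measure_union_null hunion hrange))
    exact ⟨y, hyP, fun b hb hyb => hy (Or.inl (Set.mem_biUnion hb hyb)),
      fun b hb hgb => hy (Or.inr ⟨⟨b, hb⟩, hgb⟩)⟩
  choose F hF using hstep
  let x : ι → α := (wellFounded_lt (α := ι)).fix F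
  have hx : ∀ a, x a = F a fun b _ => x b := fun a => WellFounded.fix_eq _ _ _
  have hspec : ∀ a, x a ∈ P a ∧ (∀ b ≤ a, x a ∉ N b) ∧ ∀ b < a, x b ≠ x a := by
    intro a
    rw [hx a]
    exact hF a fun b _ => x b
  exact ⟨x, .of_lt_imp_ne fun b a hba => (hspec a).2.2 b hba,
    fun a => (hspec a).1, fun a => (hspec a).2.1⟩

theorem exists_isSierpinskiFor_thick_fibers_of_enumeration [NeZero μ] {ι : Type v} [LinearOrder ι]
    [WellFoundedLT ι] (hcount : ∀ a : ι, (Set.Iic a).Countable) {T : Type w} [Nonempty T]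
    {p : ι → {B : Set α // MeasurableSet B ∧ 0 < μ B} × T} (hp : Function.Surjective p)
    {q : ι → {N : Set α // MeasurableSet N ∧ μ N = 0}} (hq : Function.Surjective q) :
    ∃ S : Set α, IsSierpinskiFor μ S ∧ ∃ t : α → T, ∀ c, IsThick μ (S ∩ t ⁻¹' {c}) := by
  obtain ⟨x, hinj, hxp, hxq⟩ := exists_transfinite_selection hcount
    (P := fun a => (p a).1.1) (N := fun a => (q a).1) (fun a => (p a).1.2.2) fun a => (q a).2.2
  let t : α → T := Function.extend x (fun a => (p a).2) fun _ => Classical.arbitrary T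
  have hfiber : ∀ c, IsThick μ (Set.range x ∩ t ⁻¹' {c}) := by
    intro c B hB hpos
    obtain ⟨a, ha⟩ := hp (⟨B, hB, hpos⟩, c)
    refine ⟨x a, ⟨⟨a, rfl⟩, ?_⟩, ?_⟩
    · exact (hinj.extend_apply _ _ a).trans (congrArg Prod.snd ha)
    · simpa only [ha] using hxp a
  refine ⟨Set.range x, ⟨?_, fun N hN => ?_⟩, t, hfiber⟩
  · exact ((hfiber (Classical.arbitrary T)).mono Set.inter_subset_left).not_countable
  · obtain ⟨b, hb⟩ := hq
      ⟨toMeasurable μ N, measurableSet_toMeasurable μ N, (measure_toMeasurable N).trans hN⟩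
    refine ((hcount b).image x).mono ?_
    rintro _ ⟨⟨a, rfl⟩, haN⟩
    refine ⟨a, le_of_not_gt fun hba => hxq a b hba.le ?_, rfl⟩
    rw [hb]
    exact subset_toMeasurable μ N haN

theorem exists_isSierpinskiFor_thick_fibers [MeasurableSpace.CountablyGenerated α] [NeZero μ]
    (CH : (2 : Cardinal.{v}) ^ ℵ₀ = ℵ₁) {T : Type w} [Nonempty T] (hT : #T ≤ 𝔠) :
    ∃ S : Set α, IsSierpinskiFor μ S ∧ ∃ t : α → T, ∀ c, IsThick μ (S ∩ t ⁻¹' {c}) := by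
  let ι : Type := (ℵ₁ : Cardinal.{0}).ord.ToType
  have hι : #ι = 𝔠 := (mk_ord_toType ℵ₁).trans (continuum_eq_aleph_one CH).symm
  have : Nonempty {B : Set α // MeasurableSet B ∧ 0 < μ B} :=
    ⟨⟨Set.univ, MeasurableSet.univ, Measure.measure_univ_pos.2 (NeZero.ne μ)⟩⟩
  have : Nonempty {N : Set α // MeasurableSet N ∧ μ N = 0} :=
    ⟨⟨∅, MeasurableSet.empty, measure_empty⟩⟩
  have hmeas (Q : Set α → Prop) : #{B : Set α // MeasurableSet B ∧ Q B} ≤ 𝔠 :=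
    (mk_subtype_mono fun _ h => h.1).trans mk_measurableSet_le_continuum
  obtain ⟨p, hp⟩ := exists_surjective_of_lift_mk_le (ι := ι)
    (β := {B : Set α // MeasurableSet B ∧ 0 < μ B} × T) <| by
      rw [hι, lift_continuum, lift_le_continuum, mk_prod, ← continuum_mul_self]
      exact mul_le_mul' (lift_le_continuum.2 (hmeas _)) (lift_le_continuum.2 hT)
  obtain ⟨q, hq⟩ := exists_surjective_of_lift_mk_le (ι := ι)
    (β := {N : Set α // MeasurableSet N ∧ μ N = 0}) <| by
      rw [hι, lift_continuum, lift_le_continuum]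
      exact hmeas _
  exact exists_isSierpinskiFor_thick_fibers_of_enumeration
    countable_Iic_toType_ord_aleph_one hp hq

theorem sierpinski_strictly_independent_family_general [MeasurableSpace.CountablyGenerated α]
    (μ : Measure α) [NullSingletonClass μ] [NeZero μ] (CH : (2 : Cardinal.{v}) ^ ℵ₀ = ℵ₁) :
    ∃ (I : Type) (A : I → Set α), Function.Injective A ∧ #I = 2 ^ ℵ₁ ∧
      (∀ i, IsSierpinskiFor μ (A i) ∧ ¬NullMeasurableSet (A i) μ) ∧
      (∀ i (φ : α → α), Function.Injective φ → Measure.QuasiMeasurePreserving φ μ μ →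
        IsSierpinskiFor μ (φ '' A i)) ∧
      IsStrictlyIndependent μ A := by
  obtain ⟨S, hS, t, ht⟩ := exists_isSierpinskiFor_thick_fibers (μ := μ) CH
    (mk_traceCode_le_continuum mk_real.le)
  have hindep : IsStrictlyIndependent μ fun X : Set ℝ => S ∩ t ⁻¹' traceSet X :=
    .of_thick_fibers ht fun _ hJ f => signedInter_traceSet_nonempty hJ f
  have hSierpinski (X : Set ℝ) : IsSierpinskiFor μ (S ∩ t ⁻¹' traceSet X) :=
    hS.mono Set.inter_subset_left (hindep.isThick X).not_countable
  refine ⟨Set ℝ, _, hindep.injective, ?_, fun X => ⟨hSierpinski X, ?_⟩,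
    fun X φ hinj hφ => (hSierpinski X).image hinj hφ, hindep⟩
  · rw [mk_set, mk_real, continuum_eq_aleph_one CH]
  · exact (hindep.isThick X).not_nullMeasurableSet (hindep.isThick_compl X)

end Construction

theorem sierpinski_strictly_independent_family
    (CH : (2 : Cardinal) ^ Cardinal.aleph0 = Cardinal.aleph 1) :
    ∃ (I : Type) (A : I → Set ℝ), Function.Injective A ∧
      Cardinal.mk I = 2 ^ Cardinal.aleph 1 ∧
      (∀ i : I, IsSierpinski (A i) ∧ ¬MeasurableSet (A i)) ∧
      (∀ i : I, ∀ x : ℝ, IsSierpinski ((fun a => a + x) '' A i)) ∧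
      (∀ J : Set I, Cardinal.mk ↥J ≤ Cardinal.aleph0 → ∀ f : J → Bool,
        (∀ B : Set ℝ, B ⊆ (⋂ j : J, cond (f j) ((A j.1)ᶜ) (A j.1))ᶜ →
          MeasurableSet B → volume B = 0) ∧
        (∀ B : Set ℝ, MeasurableSet B → 0 < volume B →
          ((⋂ j : J, cond (f j) ((A j.1)ᶜ) (A j.1)) ∩ B).Nonempty)) := by
  obtain ⟨I, A, hinj, hcard, hA, himage, hindep⟩ :=
    sierpinski_strictly_independent_family_general (volume : Measure ℝ) CH
  refine ⟨I, A, hinj, hcard, fun i => ⟨(hA i).1, fun h => (hA i).2 h.nullMeasurableSet⟩,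
    fun i x => himage i _ (add_left_injective x)
      (measurePreserving_add_right volume x).quasiMeasurePreserving, fun J hJ f => ?_⟩
  have hthick := hindep J (Cardinal.le_aleph0_iff_set_countable.1 hJ) f
  exact ⟨fun B hB hmeas => hthick.measure_eq_zero_of_subset_compl hmeas.nullMeasurableSet hB,
    hthick⟩
end

section
/- Assume the continuum hypothesis (2^ℵ₀ = ℵ₁). Then there exists a nonmeager set A ⊆ ℝ such that A ∩ M is countable for every meager subset M of ℝ (so A is a Luzin set) and the symmetric difference (A + x) △ A is countable for every x ∈ ℝ. -/
/-!
Let `(H i)` be an `ω₁`-indexed family of countable subgroups of `G` such that every element of `G`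
lies in all but countably many of them, and put `A = ⋃ i, (a i + H i)`. Whatever the points `a i`
are, translating by `g` fixes every coset with `g ∈ H i`, so it changes `A` only on countably many
countable cosets. Under CH the comeagre filter has a base of size `ℵ₁`. At stage `i` only countably
many members of the base have to be respected, and `a i + H i` is contained in all of them as soon
as `a i` avoids countably many translates of meagre sets. Thus each comeagre set contains all but
countably many of the cosets, which makes `A` a Luzin set.
-/

open Cardinal Filter Set TopologicalSpace
open scoped Ordinal Pointwise symmDiff

universe u v

section Cocountable

instance neBot_cocountable {ι : Type*} [Uncountable ι] : (cocountable : Filter ι).NeBot := by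
  rw [neBot_iff, ne_eq, ← empty_mem_iff_bot, mem_cocountable, compl_empty]
  exact not_countable_univ

theorem countable_Iic_toType_omega_one (i : (ω₁).ToType) : (Iic i).Countable := by
  rw [← le_aleph0_iff_set_countable, ← lt_aleph_one_iff]
  simpa using mk_Iic_lt i (by simp) (by simp)

instance uncountable_toType_omega_one : Uncountable (ω₁).ToType := by
  rw [← aleph0_lt_mk_iff]
  simp

theorem exists_countable_eventually_mem {α : Type u} (hα : #α ≤ ℵ₁) :
    ∃ E : (ω₁ : Ordinal.{u}).ToType → Set α,
      (∀ i, (E i).Countable) ∧ ∀ x, ∀ᶠ i in cocountable, x ∈ E i := by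
  have hcard : #α ≤ #(ω₁ : Ordinal.{u}).ToType := by simpa using hα
  obtain ⟨f⟩ := hcard
  refine ⟨fun i => f ⁻¹' Iic i,
    fun i => (countable_Iic_toType_omega_one i).preimage f.injective, fun x => ?_⟩
  exact mem_cocountable.2 <| (countable_Iic_toType_omega_one (f x)).mono
    fun i (hi : ¬ f x ≤ i) => (lt_of_not_ge hi).le

end Cocountable

theorem continuum_le_aleph_one_of_two_power_aleph0_eq (CH : (2 : Cardinal.{v}) ^ ℵ₀ = ℵ₁) :
    (𝔠 : Cardinal.{u}) ≤ ℵ₁ := by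
  rw [← Cardinal.lift_le.{v}, lift_continuum, ← lift_continuum.{u, v}, ← two_power_aleph0, CH]
  simp

section CosetUnion

variable {G : Type u} [AddGroup G]

theorem countable_addSubgroup_closure {s : Set G} (hs : s.Countable) :
    (AddSubgroup.closure s : Set G).Countable := by
  have := hs.to_subtype
  rw [FreeAddGroup.closure_eq_range, AddMonoidHom.coe_range]
  exact countable_range _

variable {ι : Type v} {H : ι → AddSubgroup G} {a : ι → G} {g : G} {t : Set G}

/-- The union of the left cosets `a i + H i`; left cosets because they absorb right translation by
elements of `H i`. -/
def cosetUnion (H : ι → AddSubgroup G) (a : ι → G) : Set G :=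
  ⋃ i, a i +ᵥ (H i : Set G)

theorem countable_cosetUnion_sdiff (hH : ∀ i, (H i : Set G).Countable)
    (ht : ∀ᶠ i in cocountable, a i +ᵥ (H i : Set G) ⊆ t) : (cosetUnion H a \ t).Countable := by
  have hcosets : (⋃ i ∈ {i | ¬ a i +ᵥ (H i : Set G) ⊆ t}, a i +ᵥ (H i : Set G)).Countable :=
    (mem_cocountable.1 ht).biUnion fun i _ => (hH i).image _
  refine hcosets.mono ?_
  rintro y ⟨hy, hyt⟩
  obtain ⟨i, hyi⟩ := mem_iUnion.1 hy
  exact mem_biUnion (fun hsub => hyt (hsub hyi)) hyi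

theorem countable_cosetUnion_sdiff_preimage_add (hH : ∀ i, (H i : Set G).Countable)
    (hg : ∀ᶠ i in cocountable, g ∈ H i) :
    (cosetUnion H a \ (· + g) ⁻¹' cosetUnion H a).Countable := by
  refine countable_cosetUnion_sdiff hH (hg.mono fun i hi => ?_)
  rintro _ ⟨h, hh, rfl⟩
  exact mem_iUnion.2 ⟨i, h + g, (H i).add_mem hh hi, (add_assoc _ _ _).symm⟩

theorem countable_symmDiff_image_add_cosetUnion (hH : ∀ i, (H i : Set G).Countable)
    (hg : ∀ᶠ i in cocountable, g ∈ H i) :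
    (((· + g) '' cosetUnion H a) ∆ cosetUnion H a).Countable := by
  refine Countable.union ?_ ?_
  · have hdiff := (countable_cosetUnion_sdiff_preimage_add (a := a) hH hg).image (· + g)
    rwa [image_sdiff_preimage] at hdiff
  · have hneg : ∀ᶠ i in cocountable, -g ∈ H i := hg.mono fun i hi => (H i).neg_mem hi
    rw [image_add_right]
    exact countable_cosetUnion_sdiff_preimage_add hH hneg

variable {l : Filter G}

theorem exists_vadd_subset_of_countable [l.NeBot] [CountableInterFilter l]
    (hl : ∀ g, Tendsto (· + g) l l) {K : Set G} (hK : K.Countable) {F : Set (Set G)}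
    (hF : F.Countable) (hFl : ∀ t ∈ F, t ∈ l) : ∃ x : G, ∀ t ∈ F, x +ᵥ K ⊆ t := by
  have hmem : ∀ᶠ x in l, ∀ t ∈ F, ∀ k ∈ K, x + k ∈ t :=
    (eventually_countable_ball hF).2 fun t ht =>
      (eventually_countable_ball hK).2 fun k _ => hl k (hFl t ht)
  obtain ⟨x, hx⟩ := hmem.exists
  exact ⟨x, fun t ht => vadd_set_subset_iff.2 (hx t ht)⟩

theorem frequently_mem_cosetUnion [Uncountable ι]
    (hl : ∀ t ∈ l, ∀ᶠ i in cocountable, a i +ᵥ (H i : Set G) ⊆ t) :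
    ∃ᶠ x in l, x ∈ cosetUnion H a := by
  intro hcompl
  obtain ⟨i, hi⟩ := (hl _ hcompl).exists
  have hai : a i ∈ a i +ᵥ (H i : Set G) := ⟨0, (H i).zero_mem, add_zero _⟩
  exact hi hai (mem_iUnion.2 ⟨i, hai⟩)

theorem exists_almost_translation_invariant_of_hasBasis [l.NeBot] [CountableInterFilter l]
    (hl : ∀ g, Tendsto (· + g) l l) {B : Set (Set G)} (hB : l.HasBasis (· ∈ B) id)
    (hBcard : #B ≤ ℵ₁) (hG : #G ≤ ℵ₁) :
    ∃ A : Set G, (∃ᶠ x in l, x ∈ A) ∧ (∀ t ∈ l, (A \ t).Countable) ∧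
      ∀ g, (((· + g) '' A) ∆ A).Countable := by
  obtain ⟨E, hE, hEmem⟩ := exists_countable_eventually_mem hG
  obtain ⟨F, hF, hFmem⟩ := exists_countable_eventually_mem hBcard
  let H i := AddSubgroup.closure (E i)
  have hH i : (H i : Set G).Countable := countable_addSubgroup_closure (hE i)
  have ha i : ∃ x, ∀ t ∈ Subtype.val '' F i, x +ᵥ (H i : Set G) ⊆ t :=
    exists_vadd_subset_of_countable hl (hH i) ((hF i).image _) <| by
      rintro _ ⟨t, -, rfl⟩
      exact hB.mem_of_mem t.2
  choose a ha using ha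
  have hsub : ∀ t ∈ l, ∀ᶠ i in cocountable, a i +ᵥ (H i : Set G) ⊆ t := fun t ht => by
    obtain ⟨b, hb, hbt⟩ := hB.mem_iff.1 ht
    exact (hFmem ⟨b, hb⟩).mono fun i hi => (ha i b (mem_image_of_mem _ hi)).trans hbt
  refine ⟨cosetUnion H a, frequently_mem_cosetUnion hsub,
    fun t ht => countable_cosetUnion_sdiff hH (hsub t ht), fun g => ?_⟩
  exact countable_symmDiff_image_add_cosetUnion hH
    ((hEmem g).mono fun i hi => AddSubgroup.subset_closure hi)

end CosetUnion

section Meagre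

variable {X : Type u} [TopologicalSpace X]

theorem mk_le_continuum_of_secondCountable [SecondCountableTopology X] [T0Space X] : #X ≤ 𝔠 := by
  borelize X
  obtain ⟨f, -, hf⟩ := MeasurableSpace.measurable_injection_nat_bool_of_countablySeparated X
  simpa using lift_mk_le_lift_mk_of_injective hf

theorem mk_setOf_isGδ_le_continuum [SecondCountableTopology X] : #{s : Set X | IsGδ s} ≤ 𝔠 := by
  borelize X
  have hbasis : #(countableBasis X) ≤ 𝔠 :=
    (le_aleph0_iff_set_countable.2 (countable_countableBasis X)).trans aleph0_le_continuum
  refine (mk_le_mk_of_subset fun s hs => ?_).trans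
    (MeasurableSpace.cardinal_measurableSet_le_continuum hbasis)
  rw [mem_ofPred_eq, ← (isBasis_countableBasis X).borel_eq_generateFrom]
  exact hs.measurableSet

instance neBot_residual [BaireSpace X] [Nonempty X] : (residual X).NeBot :=
  forall_mem_nonempty_iff_neBot.1 fun _ hs => (dense_of_mem_residual hs).nonempty

theorem residual_hasBasis_isGδ [BaireSpace X] :
    (residual X).HasBasis (· ∈ {t | IsGδ t ∧ Dense t}) id :=
  ⟨fun _ => mem_residual.trans (exists_congr fun _ => and_comm)⟩

theorem isMeagre_of_countable [T1Space X] [PerfectSpace X] {s : Set X} (hs : s.Countable) :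
    IsMeagre s := by
  rw [← biUnion_of_singleton s]
  refine isMeagre_biUnion hs fun x _ => IsNowhereDense.isMeagre ?_
  rw [IsNowhereDense, closure_singleton, interior_singleton]

end Meagre

theorem exists_nonmeager_luzin_almost_translation_invariant_general
    {G : Type u} [AddGroup G] [TopologicalSpace G] [SeparatelyContinuousAdd G]
    [SecondCountableTopology G] [BaireSpace G] [T1Space G] [PerfectSpace G]
    (CH : (2 : Cardinal.{v}) ^ ℵ₀ = ℵ₁) :
    ∃ A : Set G, ¬IsMeagre A ∧ ¬A.Countable ∧
      (∀ M : Set G, IsMeagre M → (A ∩ M).Countable) ∧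
      (∀ x : G, (symmDiff ((fun a => a + x) '' A) A).Countable) := by
  have hc := continuum_le_aleph_one_of_two_power_aleph0_eq.{u} CH
  have hl (g : G) : Tendsto (· + g) (residual G) (residual G) :=
    tendsto_residual_of_isOpenMap (continuous_add_const g) (isOpenMap_add_right g)
  have hBcard : #{t : Set G | IsGδ t ∧ Dense t} ≤ ℵ₁ :=
    (mk_le_mk_of_subset fun _ ht => ht.1).trans (mk_setOf_isGδ_le_continuum.trans hc)
  obtain ⟨A, hA, hdiff, hinv⟩ := exists_almost_translation_invariant_of_hasBasis hl
    residual_hasBasis_isGδ hBcard (mk_le_continuum_of_secondCountable.trans hc)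
  refine ⟨A, hA, fun hcount => hA (isMeagre_of_countable hcount), fun M hM => ?_, hinv⟩
  simpa only [sdiff_compl] using hdiff Mᶜ hM

theorem exists_nonmeager_luzin_almost_translation_invariant
    (CH : (2 : Cardinal) ^ Cardinal.aleph0 = Cardinal.aleph 1) :
    ∃ A : Set ℝ, ¬IsMeagre A ∧ ¬A.Countable ∧
      (∀ M : Set ℝ, IsMeagre M → (A ∩ M).Countable) ∧
      (∀ x : ℝ, (symmDiff ((fun a => a + x) '' A) A).Countable) :=
  exists_nonmeager_luzin_almost_translation_invariant_general CH
end
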